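/- Let E be a finite-dimensional complex inner product space, let Φ, Ψ: E → E be bijective conjugate-linear maps satisfying Φ ∘ Φ = id_E and Ψ ∘ Ψ = id_E, and let A and B be adjoints of Φ and Ψ respectively. If the characteristic polynomials of A ∘ Φ and of B ∘ Ψ are equal, then there exists a unitary isomorphism (ℂ-linear inner-product-preserving bijection) U: E → E such that Φ = U ∘ Ψ ∘ U⁻¹. -/

import Mathlib

open scoped ComplexInnerProductSpace

/-!
Diagonalising the symmetric operators `A ∘ Φ` and `B ∘ Ψ` gives a unitary intertwining them, so we
may assume they coincide; since `⟪A (Φ x), x⟫ = ‖Φ x‖ ^ 2`, this says `‖Φ x‖ = ‖Ψ x‖` for all `x`.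
Then `T = Φ ∘ Ψ⁻¹` is unitary, and `Φ ∘ Φ = Ψ ∘ Ψ` gives `Ψ ∘ T = T⁻¹ ∘ Ψ`. A unitary square root
`U` of `T` that is a polynomial in `T` satisfies `Ψ ∘ U = U⁻¹ ∘ Ψ` as well, because both `Ψ` and
the Hilbert space adjoint conjugate coefficients. Hence `U ∘ Ψ ∘ U⁻¹ = U ∘ U ∘ Ψ = T ∘ Ψ = Φ`.
-/

open Polynomial

theorem exists_eval_pow_eq_of_finite {K : Type*} [Field K] [IsAlgClosed K] {s : Set K}
    (hs : s.Finite) {n : ℕ} (hn : 0 < n) : ∃ p : K[X], ∀ z ∈ s, p.eval z ^ n = z := by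
  classical
  choose r hr using fun z : K ↦ IsAlgClosed.exists_pow_nat_eq z hn
  refine ⟨Lagrange.interpolate hs.toFinset id r, fun z hz ↦ ?_⟩
  have hpz : (Lagrange.interpolate hs.toFinset id r).eval z = r z :=
    Lagrange.eval_interpolate_at_node r Function.injective_id.injOn (hs.mem_toFinset.2 hz)
  rw [hpz, hr]

theorem exists_aeval_mem_unitary_pow_eq {R : Type*} [TopologicalSpace R] [Ring R] [StarRing R]
    [Algebra ℂ R] [ContinuousFunctionalCalculus ℂ R IsStarNormal] {u : R} (hu : u ∈ unitary R)
    (hfin : (spectrum ℂ u).Finite) {n : ℕ} (hn : 0 < n) :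
    ∃ p : ℂ[X], aeval u p ∈ unitary R ∧ aeval u p ^ n = u := by
  have hnormal : IsStarNormal u := isStarNormal_of_mem_unitary hu
  obtain ⟨p, hp⟩ := exists_eval_pow_eq_of_finite hfin hn
  refine ⟨p, ?_, ?_⟩
  · rw [← cfc_polynomial p u, cfc_unitary_iff p.eval u]
    intro z hz
    have hz_norm : ‖z‖ = 1 :=
      CStarRing.norm_of_mem_unitary (spectrum_subset_unitary_of_mem_unitary hu hz)
    have hpz_norm : ‖p.eval z‖ = 1 :=
      (pow_eq_one_iff_of_nonneg (norm_nonneg _) hn.ne').1 (by rw [← norm_pow, hp z hz, hz_norm])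
    rw [Complex.star_def, Complex.conj_mul', hpz_norm, Complex.ofReal_one, one_pow]
  · calc aeval u p ^ n = cfc (p ^ n).eval u := by rw [cfc_polynomial (p ^ n) u, map_pow]
      _ = cfc id u := cfc_congr fun z hz ↦ by rw [eval_pow, hp z hz, id]
      _ = u := cfc_id ℂ u

theorem map_aeval_apply_eq_star_aeval_apply {𝕜 E F : Type*} [RCLike 𝕜]
    [NormedAddCommGroup E] [NormedSpace 𝕜 E]
    [NormedAddCommGroup F] [InnerProductSpace 𝕜 F] [CompleteSpace F]
    {Φ : E →ₗ⋆[𝕜] F} {S : E →L[𝕜] E} {T : F →L[𝕜] F}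
    (h : ∀ x, Φ (S x) = star T (Φ x)) (p : 𝕜[X]) (x : E) :
    Φ (aeval S p x) = star (aeval T p) (Φ x) := by
  induction p using Polynomial.induction_on' with
  | add p q hp hq => simp only [map_add, star_add, add_apply, hp, hq]
  | monomial n a =>
    have hpow : Φ ((S ^ n) x) = (star T ^ n) (Φ x) := by
      simpa only [FunLike.coe_pow_eq_iterate] using Function.Semiconj.iterate_right (f := Φ) h n x
    simp only [aeval_monomial, ← Algebra.smul_def, star_smul, star_pow,
      smul_apply, LinearMap.map_smulₛₗ, hpow, starRingEnd_apply]

theorem finite_spectrum_continuousLinearMap {𝕜 E : Type*} [NontriviallyNormedField 𝕜]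
    [CompleteSpace 𝕜] [NormedAddCommGroup E] [NormedSpace 𝕜 E] [FiniteDimensional 𝕜 E]
    (T : E →L[𝕜] E) : (spectrum 𝕜 T).Finite := by
  rw [← AlgEquiv.spectrum_eq (Module.End.toContinuousLinearMap E).symm T]
  exact Module.End.finite_spectrum _

theorem exists_linearIsometryEquiv_conj_of_norm_eq {E : Type*} [NormedAddCommGroup E]
    [InnerProductSpace ℂ E] [FiniteDimensional ℂ E] {Φ Ψ : E ≃ₗ⋆[ℂ] E}
    (hsq : ∀ x, Φ (Φ x) = Ψ (Ψ x)) (hnorm : ∀ x, ‖Φ x‖ = ‖Ψ x‖) :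
    ∃ U : E ≃ₗᵢ[ℂ] E, ∀ x, Φ x = U (Ψ (U.symm x)) := by
  have := FiniteDimensional.complete ℂ E
  let T : E ≃ₗᵢ[ℂ] E := ⟨Ψ.symm.trans Φ, fun x ↦ by simp [hnorm]⟩
  let t : unitary (E →L[ℂ] E) := Unitary.linearIsometryEquiv.symm T
  obtain ⟨p, hu, hsqrt⟩ := exists_aeval_mem_unitary_pow_eq t.2
    (finite_spectrum_continuousLinearMap (t : E →L[ℂ] E)) two_pos
  let U : E ≃ₗᵢ[ℂ] E := Unitary.linearIsometryEquiv ⟨aeval (t : E →L[ℂ] E) p, hu⟩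
  have hUU (x : E) : U (U x) = T x := congr($hsqrt x)
  have hΨT (x : E) : Ψ (T x) = T.symm (Ψ x) := by
    change Ψ (Φ (Ψ.symm x)) = Ψ (Φ.symm (Ψ x))
    rw [← Φ.symm_apply_apply (Φ (Ψ.symm x)), hsq, Ψ.apply_symm_apply]
  have hstar (x : E) : star (t : E →L[ℂ] E) x = T.symm x := congr($(T.star_eq_symm) x)
  have hΨU (x : E) : Ψ (U x) = U.symm (Ψ x) :=
    map_aeval_apply_eq_star_aeval_apply (Φ := Ψ.toLinearMap)
      (fun y ↦ (hΨT y).trans (hstar (Ψ y)).symm) p x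
  refine ⟨U, fun x ↦ ?_⟩
  calc Φ x = T (Ψ x) := congrArg Φ (Ψ.symm_apply_apply x).symm
    _ = U (U (Ψ (U (U.symm x)))) := by rw [hUU, U.apply_symm_apply]
    _ = U (Ψ (U.symm x)) := by rw [hΨU, U.apply_symm_apply]

section

variable {𝕜 E F : Type*} [RCLike 𝕜] [NormedAddCommGroup E] [InnerProductSpace 𝕜 E]
  [NormedAddCommGroup F] [InnerProductSpace 𝕜 F]

theorem exists_linearIsometryEquiv_apply_eq_of_charpoly_eq
    [FiniteDimensional 𝕜 E] [FiniteDimensional 𝕜 F] {S : E →ₗ[𝕜] E} {T : F →ₗ[𝕜] F}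
    (hS : S.IsSymmetric) (hT : T.IsSymmetric) (h : S.charpoly = T.charpoly) :
    ∃ V : E ≃ₗᵢ[𝕜] F, ∀ x, V (S x) = T (V x) := by
  have hrank : Module.finrank 𝕜 F = Module.finrank 𝕜 E := by
    rw [← S.charpoly_natDegree, ← T.charpoly_natDegree, h]
  have hev : hS.eigenvalues rfl = hT.eigenvalues hrank :=
    (hS.eigenvalues_eq_eigenvalues_iff rfl hT hrank).2 h
  let b := hS.eigenvectorBasis rfl
  let c := hT.eigenvectorBasis hrank
  let V : E ≃ₗᵢ[𝕜] F := b.equiv c (Equiv.refl _)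
  have hVb (i) : V (b i) = c i := b.equiv_apply_basis c (Equiv.refl _) i
  have hVS : V.toLinearEquiv.toLinearMap ∘ₗ S = T ∘ₗ V.toLinearEquiv.toLinearMap := by
    refine b.toBasis.ext fun i ↦ ?_
    rw [b.coe_toBasis]
    calc V (S (b i)) = V ((hS.eigenvalues rfl i : 𝕜) • b i) := by
          rw [hS.apply_eigenvectorBasis rfl i]
      _ = (hT.eigenvalues hrank i : 𝕜) • c i := by rw [map_smul, hVb, hev]
      _ = T (V (b i)) := by rw [hVb, hT.apply_eigenvectorBasis hrank i]
  exact ⟨V, LinearMap.congr_fun hVS⟩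

/-- `A` is an adjoint of the conjugate-linear map `Φ`. Unlike for linear maps, `A y` stands on the
left of the inner product, because `⟪Φ x, y⟫` is linear in both `x` and `y`. -/
def IsConjAdjoint (Φ : E →ₗ⋆[𝕜] F) (A : F →ₗ⋆[𝕜] E) : Prop :=
  ∀ x y, inner 𝕜 (Φ x) y = inner 𝕜 (A y) x

namespace IsConjAdjoint

variable {Φ : E →ₗ⋆[𝕜] F} {A : F →ₗ⋆[𝕜] E}

theorem inner_comp_apply (h : IsConjAdjoint Φ A) (x y : E) :
    inner 𝕜 (A.comp Φ x) y = inner 𝕜 (Φ y) (Φ x) :=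
  (h y (Φ x)).symm

theorem isSymmetric_comp (h : IsConjAdjoint Φ A) : (A.comp Φ : E →ₗ[𝕜] E).IsSymmetric := by
  intro x y
  rw [← inner_conj_symm x, h.inner_comp_apply, h.inner_comp_apply, inner_conj_symm]

theorem norm_sq_eq (h : IsConjAdjoint Φ A) (x : E) :
    ((‖Φ x‖ ^ 2 : ℝ) : 𝕜) = inner 𝕜 (A.comp Φ x) x := by
  rw [h.inner_comp_apply, inner_self_eq_norm_sq_to_K, RCLike.ofReal_pow]

end IsConjAdjoint

theorem norm_apply_eq_of_intertwining {G H : Type*}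
    [NormedAddCommGroup G] [InnerProductSpace 𝕜 G] [NormedAddCommGroup H] [InnerProductSpace 𝕜 H]
    {Φ : E →ₗ⋆[𝕜] G} {A : G →ₗ⋆[𝕜] E} {Ψ : F →ₗ⋆[𝕜] H} {B : H →ₗ⋆[𝕜] F}
    (hA : IsConjAdjoint Φ A) (hB : IsConjAdjoint Ψ B) {V : E →ₗᵢ[𝕜] F}
    (hV : ∀ x, V (A.comp Φ x) = B.comp Ψ (V x)) (x : E) : ‖Ψ (V x)‖ = ‖Φ x‖ := by
  have hsq : ((‖Ψ (V x)‖ ^ 2 : ℝ) : 𝕜) = (‖Φ x‖ ^ 2 : ℝ) := by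
    rw [hB.norm_sq_eq, hA.norm_sq_eq, ← hV, V.inner_map_map]
  exact (sq_eq_sq₀ (norm_nonneg _) (norm_nonneg _)).1 (RCLike.ofReal_injective hsq)

end

theorem conjLinear_involutions_unitarily_conjugate_of_charpoly_eq_general {E F : Type*}
    [NormedAddCommGroup E] [InnerProductSpace ℂ E] [FiniteDimensional ℂ E]
    [NormedAddCommGroup F] [InnerProductSpace ℂ F] [FiniteDimensional ℂ F]
    (Φ : E ≃ₗ⋆[ℂ] E) (Ψ : F ≃ₗ⋆[ℂ] F) {c : ℂ}
    (hΦ : ∀ x, Φ (Φ x) = c • x) (hΨ : ∀ x, Ψ (Ψ x) = c • x)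
    {A : E →ₗ⋆[ℂ] E} (hA : IsConjAdjoint Φ.toLinearMap A)
    {B : F →ₗ⋆[ℂ] F} (hB : IsConjAdjoint Ψ.toLinearMap B)
    (hchar : (A.comp Φ.toLinearMap).charpoly = (B.comp Ψ.toLinearMap).charpoly) :
    ∃ U : F ≃ₗᵢ[ℂ] E, ∀ x, Φ x = U (Ψ (U.symm x)) := by
  obtain ⟨V, hV⟩ := exists_linearIsometryEquiv_apply_eq_of_charpoly_eq
    hA.isSymmetric_comp hB.isSymmetric_comp hchar
  let Ψ' : E ≃ₗ⋆[ℂ] E := (V.toLinearEquiv.trans Ψ).trans V.symm.toLinearEquiv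
  have hΨ' (x : E) : Ψ' x = V.symm (Ψ (V x)) := rfl
  have hnorm (x : E) : ‖Φ x‖ = ‖Ψ' x‖ := by
    rw [hΨ', V.symm.norm_map]
    exact (norm_apply_eq_of_intertwining hA hB (V := V.toLinearIsometry) hV x).symm
  have hsq (x : E) : Φ (Φ x) = Ψ' (Ψ' x) := by simp [hΨ', hΦ, hΨ]
  obtain ⟨W, hW⟩ := exists_linearIsometryEquiv_conj_of_norm_eq hsq hnorm
  exact ⟨V.symm.trans W, hW⟩

theorem conjLinear_involutions_unitarily_conjugate_of_charpoly_eq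
    {E : Type} [NormedAddCommGroup E] [InnerProductSpace ℂ E] [FiniteDimensional ℂ E]
    (Φ Ψ : E →ₗ⋆[ℂ] E)
    (hΦbij : Function.Bijective Φ) (hΨbij : Function.Bijective Ψ)
    (hΦinv : ∀ x : E, Φ (Φ x) = x) (hΨinv : ∀ x : E, Ψ (Ψ x) = x)
    (A : E →ₗ⋆[ℂ] E) (hA : ∀ x y : E, ⟪Φ x, y⟫ = ⟪A y, x⟫)
    (B : E →ₗ⋆[ℂ] E) (hB : ∀ x y : E, ⟪Ψ x, y⟫ = ⟪B y, x⟫)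
    (hchar : (A.comp Φ).charpoly = (B.comp Ψ).charpoly) :
    ∃ U : E ≃ₗᵢ[ℂ] E, ∀ x : E, Φ x = U (Ψ (U.symm x)) :=
  conjLinear_involutions_unitarily_conjugate_of_charpoly_eq_general
    (.ofInvolutive Φ hΦinv) (.ofInvolutive Ψ hΨinv) (c := 1)
    (fun x ↦ (hΦinv x).trans (one_smul ℂ x).symm) (fun x ↦ (hΨinv x).trans (one_smul ℂ x).symm)
    hA hB hchar
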